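/- arXiv:1812.09498 — 2 statements merged into one kernel-verified Lean document; each statement's English description precedes it below -/
import Mathlib

section
/- Let v ∈ C²([a,b]) satisfy v''(x) = q(x)·v(x) on [a,b] with v(a) = 1 and v(b) = 0. Then v is nonincreasing on [a,b] and 0 ≤ v(x) ≤ 1 for every x ∈ [a,b]. -/
open Set

noncomputable section

/-- `v` is twice continuously differentiable on `s`, with first derivative `v'`
and second derivative `v''` (derivatives within `s`). -/
def IsC2On (v v' v'' : ℝ → ℝ) (s : Set ℝ) : Prop :=
  (∀ x ∈ s, HasDerivWithinAt v (v' x) s x) ∧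
  (∀ x ∈ s, HasDerivWithinAt v' (v'' x) s x) ∧
  ContinuousOn v'' s

/-!
Differentiating twice, `(‖v‖²)'' = 2 (‖v'‖² + ⟪v, v''⟫) ≥ 0`, since `⟪v, v''⟫ = q v² ≥ 0`. So
`‖v‖²` is convex, and as it attains its minimum `0` at the right endpoint, it is nonincreasing. In
particular `v` stays zero once it has vanished; being positive at the left endpoint, it never
becomes negative, whence `v = ‖v‖`.
-/

section Convexity

variable {E : Type*} [NormedAddCommGroup E] [InnerProductSpace ℝ E]

theorem convexOn_norm_sq_of_inner_nonneg {D : Set ℝ} (hD : Convex ℝ D) {v v' v'' : ℝ → E}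
    (hcont : ContinuousOn v D)
    (hv : ∀ x ∈ interior D, HasDerivAt v (v' x) x)
    (hv' : ∀ x ∈ interior D, HasDerivAt v' (v'' x) x)
    (hinner : ∀ x ∈ interior D, 0 ≤ inner ℝ (v x) (v'' x)) :
    ConvexOn ℝ D (fun x ↦ ‖v x‖ ^ 2) := by
  refine convexOn_of_hasDerivWithinAt2_nonneg hD (hcont.norm.pow 2)
    (fun x hx ↦ (hv x hx).norm_sq.hasDerivWithinAt)
    (fun x hx ↦ (((hv x hx).inner ℝ (hv' x hx)).const_mul 2).hasDerivWithinAt)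
    (fun x hx ↦ ?_)
  have hspeed : 0 ≤ inner ℝ (v' x) (v' x) := real_inner_self_nonneg
  linarith [hinner x hx]

theorem antitoneOn_of_convexOn_of_isMinOn {𝕜 β : Type*} [Field 𝕜] [LinearOrder 𝕜]
    [IsStrictOrderedRing 𝕜] [AddCommMonoid β] [LinearOrder β] [IsOrderedCancelAddMonoid β]
    [Module 𝕜 β] [PosSMulStrictMono 𝕜 β] {s : Set 𝕜} {f : 𝕜 → β} {b : 𝕜}
    (hf : ConvexOn 𝕜 s f) (hb : IsGreatest s b) (hmin : IsMinOn f s b) : AntitoneOn f s := by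
  intro x hx y hy hxy
  rcases (hb.2 hy).eq_or_lt with rfl | hyb
  · exact hmin hx
  · exact hf.le_left_of_right_le'' hx hb.1 hxy hyb (hmin hy)

theorem antitoneOn_norm_of_inner_nonneg {D : Set ℝ} (hD : Convex ℝ D) {v v' v'' : ℝ → E} {b : ℝ}
    (hcont : ContinuousOn v D)
    (hv : ∀ x ∈ interior D, HasDerivAt v (v' x) x)
    (hv' : ∀ x ∈ interior D, HasDerivAt v' (v'' x) x)
    (hinner : ∀ x ∈ interior D, 0 ≤ inner ℝ (v x) (v'' x))
    (hb : IsGreatest D b) (hvb : v b = 0) :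
    AntitoneOn (fun x ↦ ‖v x‖) D := by
  have hmin : IsMinOn (fun x ↦ ‖v x‖ ^ 2) D b := fun x _ ↦ by simp [hvb]
  have hsq : AntitoneOn (fun x ↦ ‖v x‖ ^ 2) D :=
    antitoneOn_of_convexOn_of_isMinOn (convexOn_norm_sq_of_inner_nonneg hD hcont hv hv' hinner)
      hb hmin
  exact fun x hx y hy hxy ↦
    (sq_le_sq₀ (norm_nonneg _) (norm_nonneg _)).1 (hsq hx hy hxy)

end Convexity

theorem nonneg_of_antitoneOn_norm {α : Type*} [ConditionallyCompleteLinearOrder α]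
    [TopologicalSpace α] [OrderTopology α] [DenselyOrdered α] {s : Set α} [s.OrdConnected]
    {v : α → ℝ} {a x : α}
    (hcont : ContinuousOn v s) (hanti : AntitoneOn (fun y ↦ ‖v y‖) s)
    (ha : a ∈ s) (hva : 0 ≤ v a) (hx : x ∈ s) (hax : a ≤ x) : 0 ≤ v x := by
  by_contra! hneg
  have hsub : Icc a x ⊆ s := s.Icc_subset ha hx
  obtain ⟨z, hz, hvz⟩ : (0 : ℝ) ∈ v '' Icc a x :=
    intermediate_value_Icc' hax (hcont.mono hsub) ⟨hneg.le, hva⟩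
  have hle : ‖v x‖ ≤ ‖v z‖ := hanti (hsub hz) hx hz.2
  rw [hvz, norm_zero, norm_le_zero_iff] at hle
  exact hneg.ne hle

theorem hasDerivAt_of_mem_Ioo {E : Type*} [NormedAddCommGroup E] [NormedSpace ℝ E]
    {f f' : ℝ → E} {a b : ℝ} (hf : ∀ x ∈ Icc a b, HasDerivWithinAt f (f' x) (Icc a b) x) :
    ∀ x ∈ Ioo a b, HasDerivAt f (f' x) x :=
  fun x hx ↦ (hf x (Ioo_subset_Icc_self hx)).hasDerivAt (Icc_mem_nhds hx.1 hx.2)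

theorem linear_ode_solution_monotone_bounded_general
    {a b : ℝ} (hab : a ≤ b) {v v' v'' : ℝ → ℝ}
    (hcont : ContinuousOn v (Icc a b))
    (hv : ∀ x ∈ Ioo a b, HasDerivAt v (v' x) x)
    (hv' : ∀ x ∈ Ioo a b, HasDerivAt v' (v'' x) x)
    (hmul : ∀ x ∈ Ioo a b, 0 ≤ v x * v'' x)
    (hva : 0 ≤ v a) (hvb : v b = 0) :
    AntitoneOn v (Icc a b) ∧ ∀ x ∈ Icc a b, 0 ≤ v x ∧ v x ≤ v a := by
  have ha : a ∈ Icc a b := left_mem_Icc.2 hab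
  have hnorm : AntitoneOn (fun x ↦ ‖v x‖) (Icc a b) := by
    rw [← interior_Icc] at hv hv' hmul
    refine antitoneOn_norm_of_inner_nonneg (convex_Icc a b) hcont hv hv' (fun x hx ↦ ?_)
      (isGreatest_Icc hab) hvb
    rw [Real.inner_apply]
    exact hmul x hx
  have hnonneg : ∀ x ∈ Icc a b, 0 ≤ v x := fun x hx ↦
    nonneg_of_antitoneOn_norm hcont hnorm ha hva hx hx.1
  have hanti : AntitoneOn v (Icc a b) :=
    hnorm.congr fun x hx ↦ Real.norm_of_nonneg (hnonneg x hx)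
  exact ⟨hanti, fun x hx ↦ ⟨hnonneg x hx, hanti ha hx hx.1⟩⟩

/-- if `v ∈ C²([a,b])` satisfies `v'' = q·v` with `q ≥ 0` continuous,
`v(a) = 1` and `v(b) = 0`, then `v` is nonincreasing and `0 ≤ v ≤ 1` on `[a,b]`. -/
theorem linear_ode_solution_monotone_bounded
    (a b : ℝ) (hab : a < b)
    (q : ℝ → ℝ) (hq : ContinuousOn q (Icc a b))
    (hq0 : ∀ x ∈ Icc a b, 0 ≤ q x)
    (v v' v'' : ℝ → ℝ)
    (hv : IsC2On v v' v'' (Icc a b))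
    (hode : ∀ x ∈ Icc a b, v'' x = q x * v x)
    (hva : v a = 1) (hvb : v b = 0) :
    AntitoneOn v (Icc a b) ∧ ∀ x ∈ Icc a b, 0 ≤ v x ∧ v x ≤ 1 := by
  have hmul : ∀ x ∈ Ioo a b, 0 ≤ v x * v'' x := fun x hx ↦ by
    have hx' := Ioo_subset_Icc_self hx
    rw [hode x hx', mul_left_comm]
    exact mul_nonneg (hq0 x hx') (mul_self_nonneg (v x))
  exact hva ▸ linear_ode_solution_monotone_bounded_general hab.le
    (HasDerivWithinAt.continuousOn hv.1) (hasDerivAt_of_mem_Ioo hv.1)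
    (hasDerivAt_of_mem_Ioo hv.2.1) hmul (hva ▸ zero_le_one) hvb
end
end

section
/- Let v ∈ C²([a,b]) satisfy v''(x) = q(x)·v(x) on [a,b] with v(a) = 1 and v(b) = 0. Then v' is nondecreasing on [a,b], v'(x) ≤ 0 for every x ∈ [a,b], and for every c ∈ (a,b] one has −v'(a) ≤ 1/(c − a) + (c − a)·max_{x ∈ [a,c]} q(x); consequently |v'(x)| ≤ 1/(c − a) + (c − a)·max_{x ∈ [a,c]} q(x) for every x ∈ [a,b]. -/
open Set

noncomputable section

/-! Since `(v v')' = q v² + v'² ≥ 0`, the function `v v'` increases to its value at `b`, which is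
nonpositive by the boundary condition there. Hence `v²` is nonincreasing, so once `v` vanishes it
stays zero; as `v(a) ≥ 0`, this forces `v ≥ 0`, and `v` itself is nonincreasing. Then
`v'' = q v ≥ 0`, and `v'' ≤ M v(a)` wherever `q ≤ M`, so Taylor's inequality
`0 ≤ v(c) ≤ v(a) + v'(a) (c - a) + M v(a) (c - a)² / 2` bounds `-v'(a)`, the largest value
of `|v'|`. -/

theorem monotoneOn_of_forall_hasDerivWithinAt_nonneg {s : Set ℝ} (hs : Convex ℝ s)
    {f f' : ℝ → ℝ} (hf : ∀ x ∈ s, HasDerivWithinAt f (f' x) s x)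
    (hf' : ∀ x ∈ s, 0 ≤ f' x) : MonotoneOn f s :=
  monotoneOn_of_hasDerivWithinAt_nonneg hs (fun x hx => (hf x hx).continuousWithinAt)
    (fun x hx => (hf x (interior_subset hx)).mono interior_subset)
    (fun x hx => hf' x (interior_subset hx))

theorem antitoneOn_of_forall_hasDerivWithinAt_nonpos {s : Set ℝ} (hs : Convex ℝ s)
    {f f' : ℝ → ℝ} (hf : ∀ x ∈ s, HasDerivWithinAt f (f' x) s x)
    (hf' : ∀ x ∈ s, f' x ≤ 0) : AntitoneOn f s :=
  antitoneOn_of_hasDerivWithinAt_nonpos hs (fun x hx => (hf x hx).continuousWithinAt)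
    (fun x hx => (hf x (interior_subset hx)).mono interior_subset)
    (fun x hx => hf' x (interior_subset hx))

theorem le_add_mul_sub_of_hasDerivWithinAt_le {f f' : ℝ → ℝ} {a b K : ℝ}
    (hf : ∀ x ∈ Icc a b, HasDerivWithinAt f (f' x) (Icc a b) x)
    (hK : ∀ x ∈ Icc a b, f' x ≤ K) {x : ℝ} (hx : x ∈ Icc a b) :
    f x ≤ f a + K * (x - a) := by
  have hanti : AntitoneOn (fun y => f y - K * y) (Icc a b) :=
    antitoneOn_of_forall_hasDerivWithinAt_nonpos (convex_Icc a b)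
      (fun y hy => (hf y hy).sub ((hasDerivWithinAt_id y _).const_mul K))
      (fun y hy => by linarith [hK y hy])
  linarith [hanti (left_mem_Icc.2 (hx.1.trans hx.2)) hx hx.1]

theorem le_quadratic_of_hasDerivWithinAt_le {f f' f'' : ℝ → ℝ} {a b K : ℝ}
    (hf : ∀ x ∈ Icc a b, HasDerivWithinAt f (f' x) (Icc a b) x)
    (hf' : ∀ x ∈ Icc a b, HasDerivWithinAt f' (f'' x) (Icc a b) x)
    (hK : ∀ x ∈ Icc a b, f'' x ≤ K) {x : ℝ} (hx : x ∈ Icc a b) :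
    f x ≤ f a + f' a * (x - a) + K / 2 * (x - a) ^ 2 := by
  have hderiv : ∀ y ∈ Icc a b,
      HasDerivWithinAt (fun y => f y - K / 2 * (y - a) ^ 2) (f' y - K * (y - a)) (Icc a b) y :=
    fun y hy =>
      ((hf y hy).sub ((((hasDerivWithinAt_id y _).sub_const a).pow 2).const_mul
        (K / 2))).congr_deriv (by simp only [id_eq, Nat.cast_ofNat]; ring)
  have hle := le_add_mul_sub_of_hasDerivWithinAt_le hderiv (K := f' a)
    (fun y hy => by linarith [le_add_mul_sub_of_hasDerivWithinAt_le hf' hK hy]) hx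
  linarith

/-- The function `v`, with derivative `v'`, solves the linear equation `v'' = q v` on `s`.
Derivatives are taken within `s`, so they are one-sided at the endpoints of an interval. -/
structure IsLinearODESolutionOn (q v v' : ℝ → ℝ) (s : Set ℝ) : Prop where
  hasDerivWithinAt : ∀ x ∈ s, HasDerivWithinAt v (v' x) s x
  hasDerivWithinAt_deriv : ∀ x ∈ s, HasDerivWithinAt v' (q x * v x) s x

theorem IsC2On.isLinearODESolutionOn {q v v' v'' : ℝ → ℝ} {s : Set ℝ} (hv : IsC2On v v' v'' s)
    (hode : ∀ x ∈ s, v'' x = q x * v x) : IsLinearODESolutionOn q v v' s :=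
  ⟨hv.1, fun x hx => hode x hx ▸ hv.2.1 x hx⟩

namespace IsLinearODESolutionOn

variable {q v v' : ℝ → ℝ} {s t : Set ℝ} {a b : ℝ}

theorem mono (hv : IsLinearODESolutionOn q v v' t) (hst : s ⊆ t) :
    IsLinearODESolutionOn q v v' s :=
  ⟨fun x hx => (hv.hasDerivWithinAt x (hst hx)).mono hst,
    fun x hx => (hv.hasDerivWithinAt_deriv x (hst hx)).mono hst⟩

theorem continuousOn (hv : IsLinearODESolutionOn q v v' s) : ContinuousOn v s :=
  fun x hx => (hv.hasDerivWithinAt x hx).continuousWithinAt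

theorem monotoneOn_mul_deriv (hv : IsLinearODESolutionOn q v v' s) (hs : Convex ℝ s)
    (hq : ∀ x ∈ s, 0 ≤ q x) : MonotoneOn (fun x => v x * v' x) s :=
  monotoneOn_of_forall_hasDerivWithinAt_nonneg hs
    (fun x hx => (hv.hasDerivWithinAt x hx).mul (hv.hasDerivWithinAt_deriv x hx))
    (fun x hx => by
      have hqv : 0 ≤ q x * v x ^ 2 := mul_nonneg (hq x hx) (sq_nonneg _)
      linarith [sq_nonneg (v' x)])

theorem antitoneOn_sq (hv : IsLinearODESolutionOn q v v' (Icc a b))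
    (hq : ∀ x ∈ Icc a b, 0 ≤ q x) (hb : v b * v' b ≤ 0) :
    AntitoneOn (fun x => v x ^ 2) (Icc a b) :=
  antitoneOn_of_forall_hasDerivWithinAt_nonpos (convex_Icc a b)
    (fun x hx => (hv.hasDerivWithinAt x hx).pow 2)
    (fun x hx => by
      have hvv' : v x * v' x ≤ v b * v' b :=
        hv.monotoneOn_mul_deriv (convex_Icc a b) hq hx (right_mem_Icc.2 (hx.1.trans hx.2)) hx.2
      calc (2 : ℕ) * v x ^ (2 - 1) * v' x = 2 * (v x * v' x) := by push_cast; ring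
        _ ≤ 0 := by linarith)

theorem nonneg (hv : IsLinearODESolutionOn q v v' (Icc a b)) (hq : ∀ x ∈ Icc a b, 0 ≤ q x)
    (ha : 0 ≤ v a) (hb : v b * v' b ≤ 0) {x : ℝ} (hx : x ∈ Icc a b) : 0 ≤ v x := by
  by_contra! hneg
  obtain ⟨z, hz, hvz⟩ : (0 : ℝ) ∈ v '' Icc a x :=
    intermediate_value_Icc' hx.1 (hv.continuousOn.mono (Icc_subset_Icc_right hx.2)) ⟨hneg.le, ha⟩
  have hsq : v x ^ 2 ≤ v z ^ 2 := hv.antitoneOn_sq hq hb ⟨hz.1, hz.2.trans hx.2⟩ hx hz.2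
  rw [hvz, zero_pow two_ne_zero] at hsq
  exact hsq.not_gt (sq_pos_of_neg hneg)

theorem antitoneOn (hv : IsLinearODESolutionOn q v v' (Icc a b)) (hq : ∀ x ∈ Icc a b, 0 ≤ q x)
    (ha : 0 ≤ v a) (hb : v b * v' b ≤ 0) : AntitoneOn v (Icc a b) := fun _ hx _ hy hxy =>
  le_of_sq_le_sq (hv.antitoneOn_sq hq hb hx hy hxy) (hv.nonneg hq ha hb hx)

theorem monotoneOn_deriv (hv : IsLinearODESolutionOn q v v' (Icc a b))
    (hq : ∀ x ∈ Icc a b, 0 ≤ q x) (ha : 0 ≤ v a) (hb : v b * v' b ≤ 0) :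
    MonotoneOn v' (Icc a b) :=
  monotoneOn_of_forall_hasDerivWithinAt_nonneg (convex_Icc a b) hv.hasDerivWithinAt_deriv
    fun x hx => mul_nonneg (hq x hx) (hv.nonneg hq ha hb hx)

theorem deriv_nonpos (hv : IsLinearODESolutionOn q v v' (Icc a b)) (hab : a < b)
    (hq : ∀ x ∈ Icc a b, 0 ≤ q x) (ha : 0 ≤ v a) (hb : v b * v' b ≤ 0) {x : ℝ}
    (hx : x ∈ Icc a b) : v' x ≤ 0 := by
  rw [← (hv.hasDerivWithinAt x hx).derivWithin (uniqueDiffOn_Icc hab x hx)]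
  exact (hv.antitoneOn hq ha hb).derivWithin_nonpos

theorem neg_deriv_left_le (hv : IsLinearODESolutionOn q v v' (Icc a b))
    (hq : ∀ x ∈ Icc a b, 0 ≤ q x) (ha : 0 ≤ v a) (hb : v b * v' b ≤ 0) {c M : ℝ}
    (hc : c ∈ Ioc a b) (hM : M ∈ upperBounds (q '' Icc a c)) :
    -v' a ≤ v a * (1 / (c - a) + (c - a) / 2 * M) := by
  have hca : 0 < c - a := sub_pos.2 hc.1
  have hsub : Icc a c ⊆ Icc a b := Icc_subset_Icc_right hc.2
  have hac : a ∈ Icc a c := left_mem_Icc.2 hc.1.le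
  have hsecond : ∀ x ∈ Icc a c, q x * v x ≤ M * v a := fun x hx =>
    have hqM : q x ≤ M := hM (mem_image_of_mem q hx)
    mul_le_mul hqM (hv.antitoneOn hq ha hb (hsub hac) (hsub hx) hx.1)
      (hv.nonneg hq ha hb (hsub hx)) ((hq x (hsub hx)).trans hqM)
  have htaylor : 0 ≤ v a + v' a * (c - a) + M * v a / 2 * (c - a) ^ 2 :=
    (hv.nonneg hq ha hb ⟨hc.1.le, hc.2⟩).trans <|
      le_quadratic_of_hasDerivWithinAt_le (hv.mono hsub).hasDerivWithinAt
        (hv.mono hsub).hasDerivWithinAt_deriv hsecond (right_mem_Icc.2 hc.1.le)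
  calc -v' a ≤ (v a + M * v a / 2 * (c - a) ^ 2) / (c - a) := by
        rw [le_div_iff₀ hca]
        linarith
    _ = v a * (1 / (c - a) + (c - a) / 2 * M) := by
        field_simp

end IsLinearODESolutionOn

theorem linear_ode_solution_derivative_bound_general {a b : ℝ} (hab : a < b) {q v v' : ℝ → ℝ}
    (hv : IsLinearODESolutionOn q v v' (Icc a b)) (hq : ∀ x ∈ Icc a b, 0 ≤ q x)
    (ha : 0 ≤ v a) (hb : v b * v' b ≤ 0) :
    MonotoneOn v' (Icc a b) ∧ (∀ x ∈ Icc a b, v' x ≤ 0) ∧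
    ∀ c ∈ Ioc a b, ∀ M ∈ upperBounds (q '' Icc a c), ∀ x ∈ Icc a b,
      |v' x| ≤ v a * (1 / (c - a) + (c - a) / 2 * M) := by
  have hmono : MonotoneOn v' (Icc a b) := hv.monotoneOn_deriv hq ha hb
  have hnonpos : ∀ x ∈ Icc a b, v' x ≤ 0 := fun x hx => hv.deriv_nonpos hab hq ha hb hx
  refine ⟨hmono, hnonpos, fun c hc M hM x hx => ?_⟩
  calc |v' x| = -v' x := abs_of_nonpos (hnonpos x hx)
    _ ≤ -v' a := neg_le_neg (hmono (left_mem_Icc.2 hab.le) hx hx.1)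
    _ ≤ v a * (1 / (c - a) + (c - a) / 2 * M) := hv.neg_deriv_left_le hq ha hb hc hM

/-- if `v ∈ C²([a,b])` satisfies `v'' = q·v` with `q ≥ 0` continuous,
`v(a) = 1` and `v(b) = 0`, then `v'` is nondecreasing and nonpositive on `[a,b]`, and
for every `c ∈ (a,b]` one has `−v'(a) ≤ 1/(c−a) + (c−a)·max_{[a,c]} q`; consequently
`|v'(x)|` obeys the same bound for every `x ∈ [a,b]`. -/
theorem linear_ode_solution_derivative_bound
    (a b : ℝ) (hab : a < b)
    (q : ℝ → ℝ) (hq : ContinuousOn q (Icc a b))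
    (hq0 : ∀ x ∈ Icc a b, 0 ≤ q x)
    (v v' v'' : ℝ → ℝ)
    (hv : IsC2On v v' v'' (Icc a b))
    (hode : ∀ x ∈ Icc a b, v'' x = q x * v x)
    (hva : v a = 1) (hvb : v b = 0) :
    MonotoneOn v' (Icc a b) ∧ (∀ x ∈ Icc a b, v' x ≤ 0) ∧
    ∀ c ∈ Ioc a b,
      -(v' a) ≤ 1 / (c - a) + (c - a) * sSup (q '' Icc a c) ∧
      ∀ x ∈ Icc a b, |v' x| ≤ 1 / (c - a) + (c - a) * sSup (q '' Icc a c) := by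
  obtain ⟨hmono, hnonpos, hbound⟩ := linear_ode_solution_derivative_bound_general hab
    (hv.isLinearODESolutionOn hode) hq0 (hva ▸ zero_le_one) (by rw [hvb, zero_mul])
  refine ⟨hmono, hnonpos, fun c hc => ?_⟩
  have hsub : Icc a c ⊆ Icc a b := Icc_subset_Icc_right hc.2
  have hsup : IsLUB (q '' Icc a c) (sSup (q '' Icc a c)) :=
    (isCompact_Icc.image_of_continuousOn (hq.mono hsub)).isLUB_sSup
      ((nonempty_Icc.2 hc.1.le).image q)
  have hsup_nonneg : 0 ≤ sSup (q '' Icc a c) :=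
    Real.sSup_nonneg (forall_mem_image.2 fun x hx => hq0 x (hsub hx))
  have hle : ∀ x ∈ Icc a b, |v' x| ≤ 1 / (c - a) + (c - a) * sSup (q '' Icc a c) :=
    fun x hx => (hbound c hc _ hsup.1 x hx).trans <| by
      rw [hva, one_mul]
      gcongr
      exact half_le_self (sub_nonneg.2 hc.1.le)
  exact ⟨(neg_le_abs _).trans (hle a (left_mem_Icc.2 hab.le)), hle⟩
end
end
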